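/- Consider the moment problem (P): minimize over finite signed regular Borel measures μ on Ω the quantity E_μ^Ω[min_{k=1,…,r} max_{ℓ=1,…,L} g_ℓ^k(ω)] subject to E_μ^Ω[h_j(ω)] ≤ γ_j for j=1,…,J, E_μ^Ω[1] = 1, and μ ⪰_B 0, where Ω ⊂ ℝ^m is a projected spectrahedron given by matrices F_0,…,F_m, M_1,…,M_N, the g_ℓ^k and h_j are SOS-convex polynomials, and γ_j ∈ ℝ. Consider also the SOS optimization problem (D): maximize −Σ_{j=1}^J λ_j γ_j − λ_{J+1} over λ ∈ ℝ_+^J × ℝ, positive semi-definite ν×ν matrices Z_k, and δ^k ∈ Δ for k=1,…,r, subject to: Σ_{ℓ=1}^L δ_ℓ^k g_ℓ^k(v) + Σ_{j=1}^J λ_j h_j(v) + λ_{J+1} − tr(Z_k F_0) − Σ_{i=1}^m v_i tr(Z_k F_i) ∈ Σ_d^2(v) for each k, and tr(Z_k M_t) = 0 for all t=1,…,N and k=1,…,r, where d is the smallest even integer with d ≥ max{max_{k,ℓ} deg g_ℓ^k, max_j deg h_j}. Assume: (a) problem (P) admits a minimizer; (b) the interior point condition (γ_1,…,γ_J,1)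 ∈ int{{(⟨h_1,μ⟩,…,⟨h_J,μ⟩,⟨1,μ⟩) : μ ∈ X, μ ⪰_B 0} + ℝ_+^J × {0}} holds; (c) Ω is compact and there exist v̄, ξ̄ with F_0 + Σ_i v̄_i F_i + Σ_t ξ̄_t M_t ≻ 0. Then min(P) = max(D). -/

import Mathlib

open MvPolynomial Matrix MeasureTheory
open scoped BigOperators

noncomputable section

def IsSOS {m : ℕ} (p : MvPolynomial (Fin m) ℝ) : Prop :=
  ∃ (J : ℕ) (f : Fin J → MvPolynomial (Fin m) ℝ), p = ∑ j, (f j) ^ 2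

def IsSOSDeg {m : ℕ} (d : ℕ) (p : MvPolynomial (Fin m) ℝ) : Prop :=
  IsSOS p ∧ p.totalDegree ≤ d

def polyHessian {m : ℕ} (f : MvPolynomial (Fin m) ℝ) :
    Matrix (Fin m) (Fin m) (MvPolynomial (Fin m) ℝ) :=
  Matrix.of fun i j => pderiv i (pderiv j f)

def IsSOSConvex {m : ℕ} (f : MvPolynomial (Fin m) ℝ) : Prop :=
  ∃ (s : ℕ) (P : Matrix (Fin s) (Fin m) (MvPolynomial (Fin m) ℝ)),
    polyHessian f = Pᵀ * P

def projSpec {m N ν : ℕ} (F0 : Matrix (Fin ν) (Fin ν) ℝ)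
    (F : Fin m → Matrix (Fin ν) (Fin ν) ℝ)
    (M : Fin N → Matrix (Fin ν) (Fin ν) ℝ) : Set (Fin m → ℝ) :=
  {v | ∃ ξ : Fin N → ℝ, (F0 + ∑ i, v i • F i + ∑ t, ξ t • M t).PosSemidef}

def pwMinMax {m r L : ℕ} [NeZero r] [NeZero L]
    (g : Fin r → Fin L → MvPolynomial (Fin m) ℝ) (v : Fin m → ℝ) : ℝ :=
  Finset.univ.inf' Finset.univ_nonempty fun k =>
    Finset.univ.sup' Finset.univ_nonempty fun ℓ => eval v (g k ℓ)

theorem IsSOS.zero {m : ℕ} : IsSOS (0 : MvPolynomial (Fin m) ℝ) := ⟨0, fun _ => 0, by simp⟩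

theorem IsSOS.sq {m : ℕ} (p : MvPolynomial (Fin m) ℝ) : IsSOS (p ^ 2) := ⟨1, fun _ => p, by simp⟩

theorem IsSOS.add {m : ℕ} {p q : MvPolynomial (Fin m) ℝ} (hp : IsSOS p) (hq : IsSOS q) :
    IsSOS (p + q) := by
  obtain ⟨a, f, rfl⟩ := hp
  obtain ⟨b, g, rfl⟩ := hq
  exact ⟨a + b, Fin.append f g, by simp [Fin.sum_univ_add]⟩

theorem IsSOS.sum {m : ℕ} {ι : Type*} (s : Finset ι) (p : ι → MvPolynomial (Fin m) ℝ)
    (hp : ∀ i ∈ s, IsSOS (p i)) : IsSOS (∑ i ∈ s, p i) :=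
  Finset.sum_induction _ _ (fun _ _ => IsSOS.add) IsSOS.zero hp

theorem IsSOS.C_mul {m : ℕ} {p : MvPolynomial (Fin m) ℝ} (hp : IsSOS p) {c : ℝ} (hc : 0 ≤ c) :
    IsSOS (C c * p) := by
  obtain ⟨a, f, rfl⟩ := hp
  refine ⟨a, fun j => C (Real.sqrt c) * f j, ?_⟩
  simp only [mul_pow, ← map_pow, Real.sq_sqrt hc, Finset.mul_sum]

theorem IsSOS.const {m : ℕ} {c : ℝ} (hc : 0 ≤ c) : IsSOS (C c : MvPolynomial (Fin m) ℝ) := by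
  have := (IsSOS.sq (1 : MvPolynomial (Fin m) ℝ)).C_mul hc
  simpa using this

theorem IsSOS.eval_nonneg {m : ℕ} {p : MvPolynomial (Fin m) ℝ} (hp : IsSOS p) (x : Fin m → ℝ) :
    0 ≤ eval x p := by
  obtain ⟨a, f, rfl⟩ := hp
  simp only [map_sum, map_pow]
  positivity

/-- derivative along lines -/
theorem hasDerivAt_eval_line {m : ℕ} (f : MvPolynomial (Fin m) ℝ) (a w : Fin m → ℝ) (s : ℝ) :
    HasDerivAt (fun s : ℝ => eval (fun i => a i + s * w i) f)
      (∑ i, eval (fun i => a i + s * w i) (pderiv i f) * w i) s := by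
  induction f using MvPolynomial.induction_on with
  | C c => simpa using hasDerivAt_const s c
  | add p q hp hq =>
    simp only [map_add, add_mul, Finset.sum_add_distrib]
    exact hp.add hq
  | mul_X p j hp =>
    have h1 : HasDerivAt (fun s : ℝ => a j + s * w j) (w j) s := by
      simpa using ((hasDerivAt_id s).mul_const (w j)).const_add (a j)
    have h2 := hp.mul h1
    simp only [map_mul, eval_X, Derivation.leibniz, smul_eq_mul, map_add, pderiv_X]
    refine h2.congr_deriv ?_
    simp only [add_mul _ _ (w _), Finset.sum_add_distrib]
    rw [add_comm, Finset.sum_mul]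
    congr 1
    · rw [Finset.sum_eq_single j]
      · simp
      · intro b _ hb
        simp [Pi.single_apply, hb.symm]
      · simp
    · exact Finset.sum_congr rfl fun i _ => by ring

/-- tangent remainder -/
def tangentRem {m : ℕ} (a : Fin m → ℝ) (f : MvPolynomial (Fin m) ℝ) : MvPolynomial (Fin m) ℝ :=
  f - C (eval a f) - ∑ i, C (eval a (pderiv i f)) * (X i - C (a i))

theorem taylor_integral {m : ℕ} (f : MvPolynomial (Fin m) ℝ) (a x : Fin m → ℝ) :
    eval x (tangentRem a f) = ∫ s in (0:ℝ)..1, (1 - s) *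
      ∑ i, ∑ j, eval (fun i => a i + s * (x i - a i)) (pderiv i (pderiv j f)) *
        (x i - a i) * (x j - a j) := by
  set w : Fin m → ℝ := fun i => x i - a i with hw
  have hd : ∀ s : ℝ, HasDerivAt (fun s : ℝ => (1 - s) *
        (∑ j, eval (fun i => a i + s * w i) (pderiv j f) * w j)
        + eval (fun i => a i + s * w i) f)
      ((1 - s) * ∑ i, ∑ j, eval (fun i => a i + s * w i) (pderiv i (pderiv j f)) *
        w i * w j) s := by
    intro s
    have h1 : HasDerivAt (fun s : ℝ => 1 - s) (-1) s := by
      simpa using (hasDerivAt_id s).const_sub 1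
    have h2 : HasDerivAt (fun s : ℝ => ∑ j, eval (fun i => a i + s * w i) (pderiv j f) * w j)
        (∑ j, (∑ i, eval (fun i => a i + s * w i) (pderiv i (pderiv j f)) * w i) * w j) s :=
      HasDerivAt.fun_sum fun j _ => (hasDerivAt_eval_line (pderiv j f) a w s).mul_const (w j)
    refine ((h1.mul h2).add (hasDerivAt_eval_line f a w s)).congr_deriv ?_
    rw [Finset.sum_comm (f := fun i j => eval (fun i => a i + s * w i) (pderiv i (pderiv j f)) *
        w i * w j)]
    simp only [Finset.sum_mul]
    ring
  have hc : ∀ q : MvPolynomial (Fin m) ℝ,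
      Continuous fun s : ℝ => eval (fun i => a i + s * w i) q := fun q =>
    continuous_iff_continuousAt.2 fun s => (hasDerivAt_eval_line q a w s).continuousAt
  rw [intervalIntegral.integral_eq_sub_of_hasDerivAt (fun s _ => hd s)]
  · simp [tangentRem, hw]
    ring
  · apply Continuous.intervalIntegrable
    refine (continuous_const.sub continuous_id).mul ?_
    refine continuous_finsetSum _ fun i _ => continuous_finsetSum _ fun j _ => ?_
    exact ((hc _).mul continuous_const).mul continuous_const

theorem moment_psd (n : ℕ) : (Matrix.of fun (k l : Fin n) =>
    ∫ s in (0:ℝ)..1, (1 - s) * (s ^ (k:ℕ) * s ^ (l:ℕ))).PosSemidef := by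
  refine Matrix.PosSemidef.of_dotProduct_mulVec_nonneg ?_ ?_
  · ext k l
    simp [mul_comm]
  · intro c
    have : star c ⬝ᵥ (Matrix.of fun (k l : Fin n) =>
        ∫ s in (0:ℝ)..1, (1 - s) * (s ^ (k:ℕ) * s ^ (l:ℕ))) *ᵥ c
        = ∫ s in (0:ℝ)..1, (1 - s) * (∑ k : Fin n, c k * s ^ (k:ℕ)) ^ 2 := by
      simp only [dotProduct, mulVec, Matrix.of_apply, Pi.star_apply, star_trivial, Finset.mul_sum]
      simp only [← intervalIntegral.integral_const_mul, ← intervalIntegral.integral_mul_const]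
      have : ∀ s : ℝ, (1 - s) * (∑ k : Fin n, c k * s ^ (k:ℕ)) ^ 2 =
          ∑ k : Fin n, ∑ l : Fin n, c k * ((1 - s) * (s ^ (k:ℕ) * s ^ (l:ℕ)) * c l) := by
        intro s
        rw [pow_two, Finset.sum_mul_sum, Finset.mul_sum]
        refine Finset.sum_congr rfl fun k _ => ?_
        rw [Finset.mul_sum]
        exact Finset.sum_congr rfl fun l _ => by ring
      simp only [this]
      rw [intervalIntegral.integral_finsetSum]
      · refine Finset.sum_congr rfl fun k _ => ?_
        rw [intervalIntegral.integral_finsetSum]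
        intro l _
        apply Continuous.intervalIntegrable
        fun_prop
      · intro l _
        apply Continuous.intervalIntegrable
        fun_prop
    rw [this]
    apply intervalIntegral.integral_nonneg (by norm_num)
    intro s hs
    have : 0 ≤ 1 - s := by linarith [hs.2]
    positivity

/-- integral of a square of a polynomial in an extra variable is SOS -/
theorem sos_of_integral_sq {m : ℕ} (Q : Polynomial (MvPolynomial (Fin m) ℝ)) :
    ∃ p, IsSOS p ∧ ∀ x : Fin m → ℝ, eval x p =
      ∫ s in (0:ℝ)..1, (1 - s) * (Polynomial.eval s (Q.map (eval x))) ^ 2 := by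
  set n := Q.natDegree + 1 with hn
  obtain ⟨nR, R, hR⟩ := Matrix.posSemidef_iff_eq_sum_vecMulVec.1 (moment_psd n)
  refine ⟨∑ i, (∑ k : Fin n, C (R i k) * Q.coeff k) ^ 2,
    IsSOS.sum _ _ fun i _ => IsSOS.sq _, fun x => ?_⟩
  have hev : ∀ s : ℝ, Polynomial.eval s (Q.map (eval x)) =
      ∑ k : Fin n, eval x (Q.coeff k) * s ^ (k : ℕ) := by
    intro s
    rw [Polynomial.eval_map, Polynomial.eval₂_eq_sum_range, Finset.sum_range]
  have hE : ∀ k l : Fin n, ∑ i, R i k * R i l =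
      ∫ s in (0:ℝ)..1, (1 - s) * (s ^ (k:ℕ) * s ^ (l:ℕ)) := by
    intro k l
    have := congrFun (congrFun hR k) l
    simp only [Matrix.of_apply, Matrix.sum_apply, Matrix.vecMulVec_apply, Pi.star_apply, star_trivial] at this
    exact this.symm
  simp only [hev, map_sum, map_pow, map_mul, eval_C]
  have h1 : ∀ s : ℝ, (1 - s) * (∑ k : Fin n, eval x (Q.coeff k) * s ^ (k:ℕ)) ^ 2 =
      ∑ k : Fin n, ∑ l : Fin n, (eval x (Q.coeff k) * eval x (Q.coeff l)) *
        ((1 - s) * (s ^ (k:ℕ) * s ^ (l:ℕ))) := by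
    intro s
    rw [pow_two, Finset.sum_mul_sum, Finset.mul_sum]
    refine Finset.sum_congr rfl fun k _ => ?_
    rw [Finset.mul_sum]
    exact Finset.sum_congr rfl fun l _ => by ring
  simp only [h1]
  rw [intervalIntegral.integral_finsetSum]
  swap
  · intro l _
    apply Continuous.intervalIntegrable
    fun_prop
  have h2 : ∀ k : Fin n, (∫ s in (0:ℝ)..1, ∑ l : Fin n, (eval x (Q.coeff k) * eval x (Q.coeff l)) *
        ((1 - s) * (s ^ (k:ℕ) * s ^ (l:ℕ)))) =
      ∑ l : Fin n, (eval x (Q.coeff k) * eval x (Q.coeff l)) * ∑ i, R i k * R i l := by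
    intro k
    rw [intervalIntegral.integral_finsetSum]
    · simp only [intervalIntegral.integral_const_mul, hE]
    · intro l _
      apply Continuous.intervalIntegrable
      fun_prop
  simp only [h2, Finset.mul_sum]
  have h3 : ∀ i, (∑ k : Fin n, R i k * eval x (Q.coeff k)) ^ 2 =
      ∑ k : Fin n, ∑ l : Fin n, eval x (Q.coeff k) * eval x (Q.coeff l) * (R i k * R i l) := by
    intro i
    rw [pow_two, Finset.sum_mul_sum]
    exact Finset.sum_congr rfl fun k _ => Finset.sum_congr rfl fun l _ => by ring
  simp only [h3]
  rw [Finset.sum_comm]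
  exact Finset.sum_congr rfl fun k _ => Finset.sum_comm

theorem IsSOSConvex.tangent {m : ℕ} {f : MvPolynomial (Fin m) ℝ} (hf : IsSOSConvex f)
    (a : Fin m → ℝ) : IsSOS (tangentRem a f) := by
  obtain ⟨σ, P, hP⟩ := hf
  let sub : MvPolynomial (Fin m) ℝ →+* Polynomial (MvPolynomial (Fin m) ℝ) :=
    eval₂Hom (Polynomial.C.comp C)
      (fun i => Polynomial.C (C (a i)) + Polynomial.X * Polynomial.C (X i - C (a i)))
  have hsub : ∀ (x : Fin m → ℝ) (s : ℝ) (q : MvPolynomial (Fin m) ℝ),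
      Polynomial.eval s ((sub q).map (eval x)) = eval (fun i => a i + s * (x i - a i)) q := by
    intro x s q
    induction q using MvPolynomial.induction_on with
    | C c => simp [sub]
    | add p q hp hq => simp [hp, hq, Polynomial.map_add]
    | mul_X p j hp =>
      rw [map_mul, Polynomial.map_mul, Polynomial.eval_mul, hp, map_mul]
      simp [sub]
  let Q : Fin σ → Polynomial (MvPolynomial (Fin m) ℝ) := fun b =>
    ∑ i, sub (P b i) * Polynomial.C (X i - C (a i))
  choose p hp1 hp2 using fun b => sos_of_integral_sq (Q b)
  have hQ : ∀ (b : Fin σ) (x : Fin m → ℝ) (s : ℝ), Polynomial.eval s ((Q b).map (eval x)) =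
      ∑ i, eval (fun i => a i + s * (x i - a i)) (P b i) * (x i - a i) := by
    intro b x s
    simp only [Q, Polynomial.map_sum, Polynomial.map_mul, Polynomial.eval_finsetSum,
      Polynomial.eval_mul, hsub]
    simp
  have : tangentRem a f = ∑ b, p b := by
    apply MvPolynomial.funext
    intro x
    rw [taylor_integral, map_sum]
    simp only [hp2]
    rw [← intervalIntegral.integral_finsetSum]
    · congr 1
      ext s
      rw [← Finset.mul_sum]
      congr 1
      have hH : ∀ i j, pderiv i (pderiv j f) = ∑ b, P b i * P b j := by
        intro i j
        have := congrFun (congrFun hP i) j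
        simpa [polyHessian, Matrix.mul_apply] using this
      simp only [hH, hQ, pow_two, Finset.sum_mul_sum]
      simp only [map_sum, map_mul, Finset.sum_mul]
      conv_lhs =>
        enter [2, i]
        rw [Finset.sum_comm]
      rw [Finset.sum_comm]
      exact Finset.sum_congr rfl fun b _ => Finset.sum_congr rfl fun i _ =>
        Finset.sum_congr rfl fun j _ => by ring
    · intro b _
      apply Continuous.intervalIntegrable
      exact (continuous_const.sub continuous_id).mul ((Polynomial.continuous _).pow 2)
  rw [this]
  exact IsSOS.sum _ _ fun b _ => hp1 b

theorem convexOn_of_tangent {m : ℕ} {f : MvPolynomial (Fin m) ℝ}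
    (hf : ∀ a, IsSOS (tangentRem a f)) : ConvexOn ℝ Set.univ (fun x : Fin m → ℝ => eval x f) := by
  refine ⟨convex_univ, fun x _ y _ α β hα hβ hab => ?_⟩
  have h1 := (hf (α • x + β • y)).eval_nonneg x
  have h2 := (hf (α • x + β • y)).eval_nonneg y
  set z := α • x + β • y with hz
  simp only [tangentRem, map_sub, eval_C, map_sum, map_mul, eval_X] at h1 h2
  have h3 : α * (∑ i, eval z (pderiv i f) * (x i - z i)) +
      β * (∑ i, eval z (pderiv i f) * (y i - z i)) = 0 := by
    rw [Finset.mul_sum, Finset.mul_sum, ← Finset.sum_add_distrib]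
    apply Finset.sum_eq_zero
    intro i _
    have : z i = α * x i + β * y i := by simp [hz]
    have hb : β = 1 - α := by linarith
    rw [this, hb]
    ring
  have h4 := mul_nonneg hα h1
  have h5 := mul_nonneg hβ h2
  simp only [smul_eq_mul]
  have h6 : eval z f = α * eval z f + β * eval z f := by rw [← add_mul, hab, one_mul]
  linarith

open Filter Topology in
theorem attain {E : Type*} [NormedAddCommGroup E] [InnerProductSpace ℝ E] [FiniteDimensional ℝ E]
    (φ : E → ℝ) (hc : Continuous φ) (hconv : ConvexOn ℝ Set.univ φ) (hlb : ∀ x, 0 ≤ φ x)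
    (hpoly : ∀ x w, (∀ t : ℝ, 0 ≤ t → φ (x + t • w) ≤ φ x) → ∀ t : ℝ, φ (x + t • w) = φ x) :
    ∃ a, ∀ x, φ a ≤ φ x := by
  have : ProperSpace E := FiniteDimensional.proper_real E
  set c := ⨅ x, φ x with hcdef
  have hbdd : BddBelow (Set.range φ) := ⟨0, by rintro _ ⟨x, rfl⟩; exact hlb x⟩
  have hcle : ∀ x, c ≤ φ x := fun x => ciInf_le hbdd x
  have hex : ∀ n : ℕ, ∃ x, φ x ≤ c + 1 / ((n : ℝ) + 1) ∧
      ∀ y, φ y ≤ c + 1 / ((n : ℝ) + 1) → ‖x‖ ≤ ‖y‖ := by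
    intro n
    have hpos : (0 : ℝ) < 1 / ((n : ℝ) + 1) := by positivity
    have hcl : IsClosed {x | φ x ≤ c + 1 / ((n : ℝ) + 1)} := isClosed_le hc continuous_const
    obtain ⟨x0, hx0⟩ := exists_lt_of_ciInf_lt (show ⨅ x, φ x < c + 1 / ((n : ℝ) + 1) by linarith)
    obtain ⟨x, hx, hd⟩ := hcl.exists_infDist_eq_dist ⟨x0, hx0.le⟩ 0
    refine ⟨x, hx, fun y hy => ?_⟩
    have := Metric.infDist_le_dist_of_mem (x := (0 : E)) (s := {x | φ x ≤ c + 1 / ((n : ℝ) + 1)}) hy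
    rw [hd] at this
    simpa using this
  choose x hx1 hx2 using hex
  by_cases hb : ∃ R : ℝ, ∀ n, ‖x n‖ ≤ R
  · obtain ⟨R, hR⟩ := hb
    obtain ⟨a, -, ρ, hρ, hlim⟩ := tendsto_subseq_of_bounded
      (Metric.isBounded_closedBall (x := (0 : E)) (r := R)) (x := x) (fun n => by simpa using hR n)
    refine ⟨a, fun z => le_trans ?_ (hcle z)⟩
    have h1 : Tendsto (fun n => φ (x (ρ n))) atTop (𝓝 (φ a)) := (hc.tendsto a).comp hlim
    have h2 : Tendsto (fun n : ℕ => c + 1 / ((ρ n : ℝ) + 1)) atTop (𝓝 (c + 0)) :=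
      tendsto_const_nhds.add (tendsto_one_div_add_atTop_nhds_zero_nat.comp hρ.tendsto_atTop)
    rw [add_zero] at h2
    exact le_of_tendsto_of_tendsto' h1 h2 fun n => hx1 _
  · exfalso
    push Not at hb
    choose K hK using fun k : ℕ => hb (k : ℝ)
    have hKpos : ∀ k, 0 < ‖x (K k)‖ := fun k => lt_of_le_of_lt (Nat.cast_nonneg k) (hK k)
    have hKtop : Tendsto (fun k => ‖x (K k)‖) atTop atTop :=
      tendsto_atTop_mono (fun k => (hK k).le) tendsto_natCast_atTop_atTop
    obtain ⟨w, -, ρ, hρ, hlim⟩ := tendsto_subseq_of_bounded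
      (Metric.isBounded_closedBall (x := (0 : E)) (r := 1))
      (x := fun k => ‖x (K k)‖⁻¹ • x (K k)) (fun k => by
        simp [norm_smul, (hKpos k).ne'])
    have hw1 : ‖w‖ = 1 := by
      have := hlim.norm
      refine tendsto_nhds_unique this ?_
      refine tendsto_const_nhds.congr fun k => ?_
      simp [norm_smul, (hKpos (ρ k)).ne']
    have hinv0 : Tendsto (fun k => ‖x (K (ρ k))‖⁻¹) atTop (𝓝 0) :=
      tendsto_inv_atTop_zero.comp (hKtop.comp hρ.tendsto_atTop)
    have hub : ∀ n, φ (x n) ≤ c + 1 := by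
      intro n
      refine (hx1 n).trans ?_
      have : 1 / ((n : ℝ) + 1) ≤ 1 := by
        rw [div_le_one (by positivity)]
        linarith [(Nat.cast_nonneg n : (0:ℝ) ≤ n)]
      linarith
    have hmono : ∀ z, ∀ t : ℝ, 0 ≤ t → φ (z + t • w) ≤ φ z := by
      intro z t ht
      have hτ : Tendsto (fun k => t * ‖x (K (ρ k))‖⁻¹) atTop (𝓝 0) := by
        simpa using hinv0.const_mul t
      have hz : Tendsto (fun k => z + t • (‖x (K (ρ k))‖⁻¹ • x (K (ρ k))) -
          (t * ‖x (K (ρ k))‖⁻¹) • z) atTop (𝓝 (z + t • w - (0:ℝ) • z)) :=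
        (tendsto_const_nhds.add (hlim.const_smul t)).sub (hτ.smul_const z)
      rw [zero_smul, sub_zero] at hz
      have h1 := (hc.tendsto _).comp hz
      have h2 : Tendsto (fun k => φ z + (t * ‖x (K (ρ k))‖⁻¹) * (c + 1)) atTop
          (𝓝 (φ z + 0 * (c + 1))) := tendsto_const_nhds.add (hτ.mul_const _)
      rw [zero_mul, add_zero] at h2
      refine le_of_tendsto_of_tendsto h1 h2 ?_
      filter_upwards [hτ.eventually (gt_mem_nhds (zero_lt_one))] with k hk
      set τ := t * ‖x (K (ρ k))‖⁻¹ with hτd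
      have hτ0 : 0 ≤ τ := mul_nonneg ht (inv_nonneg.2 (norm_nonneg _))
      have h3 := hconv.2 (Set.mem_univ z) (Set.mem_univ (x (K (ρ k))))
        (show 0 ≤ 1 - τ by linarith) hτ0 (by ring)
      have h4 : z + t • (‖x (K (ρ k))‖⁻¹ • x (K (ρ k))) - τ • z =
          (1 - τ) • z + τ • x (K (ρ k)) := by
        rw [smul_smul, ← hτd, sub_smul, one_smul]
        abel
      simp only [Function.comp]
      rw [h4]
      refine h3.trans ?_
      simp only [smul_eq_mul]
      nlinarith [mul_le_mul_of_nonneg_left (hub (K (ρ k))) hτ0, mul_nonneg hτ0 (hlb z)]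
    have hinv : ∀ z, ∀ t : ℝ, φ (z + t • w) = φ z := fun z => hpoly z w (hmono z)
    have horth : ∀ n, inner ℝ w (x n) = 0 := by
      intro n
      have h1 := hx2 n (x n + (-(inner ℝ w (x n))) • w) (by rw [hinv]; exact hx1 n)
      have h2 : ‖x n + (-(inner ℝ w (x n))) • w‖ ^ 2 = ‖x n‖ ^ 2 - (inner ℝ w (x n)) ^ 2 := by
        rw [norm_add_sq_real, inner_smul_right, norm_smul, hw1, real_inner_comm]
        simp
        ring
      have h3 : ‖x n‖ ^ 2 ≤ ‖x n + (-(inner ℝ w (x n))) • w‖ ^ 2 := by gcongr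
      have h4 : (inner ℝ w (x n)) ^ 2 ≤ 0 := by linarith
      exact pow_eq_zero_iff (two_ne_zero) |>.1 (le_antisymm h4 (sq_nonneg _))
    have h5 : Tendsto (fun k => inner ℝ w (‖x (K (ρ k))‖⁻¹ • x (K (ρ k)))) atTop
        (𝓝 (inner ℝ w w)) := tendsto_const_nhds.inner hlim
    have h6 : inner ℝ w w = 0 := by
      refine tendsto_nhds_unique h5 ?_
      simp [inner_smul_right, horth]
    rw [real_inner_self_eq_norm_sq, hw1] at h6
    norm_num at h6

open Filter Topology in
theorem poly_line_const {m : ℕ} (f : MvPolynomial (Fin m) ℝ) (hlb : ∀ x, 0 ≤ eval x f)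
    (x w : Fin m → ℝ) (hw : ∀ t : ℝ, 0 ≤ t → eval (x + t • w) f ≤ eval x f) (t : ℝ) :
    eval (x + t • w) f = eval x f := by
  let q : Polynomial ℝ := aeval (fun i => Polynomial.C (x i) + Polynomial.X * Polynomial.C (w i)) f
  have hq : ∀ t : ℝ, q.eval t = eval (x + t • w) f := by
    intro t
    have key : ∀ f : MvPolynomial (Fin m) ℝ, (aeval (fun i => Polynomial.C (x i) +
        Polynomial.X * Polynomial.C (w i)) f : Polynomial ℝ).eval t = eval (x + t • w) f := by
      intro f
      induction f using MvPolynomial.induction_on with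
      | C c => simp
      | add p q hp hq => rw [map_add, Polynomial.eval_add, hp, hq, map_add]
      | mul_X p j hp =>
        rw [map_mul, Polynomial.eval_mul, hp, map_mul]
        congr 1
        simp only [aeval_X, Polynomial.eval_add, Polynomial.eval_C, Polynomial.eval_mul,
          Polynomial.eval_X, eval_X, Pi.add_apply, Pi.smul_apply, smul_eq_mul]
    exact key f
  have hb : IsBoundedUnder (· ≤ ·) atTop fun t => |q.eval t| := by
    refine ⟨eval x f, ?_⟩
    rw [eventually_map]
    filter_upwards [eventually_ge_atTop 0] with t ht
    rw [hq, abs_of_nonneg (hlb _)]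
    exact hw t ht
  have hdeg := (Polynomial.isBoundedUnder_abs_atTop_iff q).1 hb
  rw [Polynomial.degree_le_zero_iff] at hdeg
  rw [← hq t, hdeg]
  have h0 := hq 0
  rw [hdeg] at h0
  simpa using h0

theorem sos_of_tangent {m : ℕ} {f : MvPolynomial (Fin m) ℝ}
    (hf : ∀ a, IsSOS (tangentRem a f)) (hlb : ∀ x, 0 ≤ eval x f) : IsSOS f := by
  have hconv := convexOn_of_tangent hf
  obtain ⟨a', ha'⟩ := attain (E := EuclideanSpace ℝ (Fin m)) (fun x => eval (x.ofLp) f)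
    ((MvPolynomial.continuous_eval f).comp (PiLp.continuous_ofLp 2 _))
    (by
      refine ⟨convex_univ, fun x _ y _ α β hα hβ hab => ?_⟩
      exact hconv.2 (Set.mem_univ _) (Set.mem_univ _) hα hβ hab)
    (fun x => hlb _)
    (fun x w hw t => poly_line_const f hlb x.ofLp w.ofLp hw t)
  set a := a'.ofLp
  have ha : ∀ x : Fin m → ℝ, eval a f ≤ eval x f := fun x => ha' (WithLp.toLp 2 x)
  have hgrad : ∀ i, eval a (pderiv i f) = 0 := by
    intro i
    have h1 := hasDerivAt_eval_line f a (Pi.single i 1) 0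
    have h2 : IsLocalMin (fun s : ℝ => eval (fun j => a j + s * (Pi.single i 1 : Fin m → ℝ) j) f) 0 := by
      refine Filter.Eventually.of_forall fun s => ?_
      simpa using ha _
    have h3 := h2.hasDerivAt_eq_zero h1
    simpa [Pi.single_apply] using h3
  have h1 := hf a
  simp only [tangentRem, hgrad, map_zero, zero_mul, Finset.sum_const_zero, sub_zero] at h1
  have := h1.add (IsSOS.const (m := m) (hlb a))
  simpa using this

theorem tangentRem_add {m : ℕ} (a : Fin m → ℝ) (f g : MvPolynomial (Fin m) ℝ) :
    tangentRem a (f + g) = tangentRem a f + tangentRem a g := by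
  simp only [tangentRem, map_add, add_mul, Finset.sum_add_distrib]
  ring

theorem tangentRem_C_mul {m : ℕ} (a : Fin m → ℝ) (c : ℝ) (f : MvPolynomial (Fin m) ℝ) :
    tangentRem a (C c * f) = C c * tangentRem a f := by
  simp only [tangentRem, pderiv_C_mul, map_mul, eval_C, mul_sub, Finset.mul_sum,
    mul_assoc]
  

theorem tangentRem_C {m : ℕ} (a : Fin m → ℝ) (c : ℝ) :
    tangentRem a (C c) = 0 := by
  simp [tangentRem]

theorem tangentRem_X {m : ℕ} (a : Fin m → ℝ) (i : Fin m) :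
    tangentRem a (X i) = 0 := by
  simp only [tangentRem, eval_X, pderiv_X]
  rw [Finset.sum_eq_single i]
  · simp
  · intro j _ hj
    simp [hj.symm]
  · simp

theorem tangentRem_sum {m : ℕ} {ι : Type*} (s : Finset ι) (a : Fin m → ℝ)
    (f : ι → MvPolynomial (Fin m) ℝ) :
    tangentRem a (∑ i ∈ s, f i) = ∑ i ∈ s, tangentRem a (f i) := by
  classical
  induction s using Finset.induction_on with
  | empty => simp [tangentRem]
  | insert i s hi ih => rw [Finset.sum_insert hi, Finset.sum_insert hi, tangentRem_add, ih]

theorem integrable_of_compact {m : ℕ} {K : Set (Fin m → ℝ)} (hK : IsCompact K)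
    (μ : Measure (Fin m → ℝ)) [IsFiniteMeasure μ] (hμ : μ Kᶜ = 0)
    {φ : (Fin m → ℝ) → ℝ} (hφ : Continuous φ) : Integrable φ μ := by
  have h1 : μ.restrict K = μ := Measure.restrict_eq_self_of_ae_mem (by
    rw [ae_iff]; exact hμ)
  have h2 : IntegrableOn φ K μ := hφ.continuousOn.integrableOn_compact hK
  rwa [IntegrableOn, h1] at h2

/-- The cone of generalized moments. -/
def momCone {m J : ℕ} (K : Set (Fin m → ℝ)) (hK : IsCompact K) (φ : (Fin m → ℝ) → ℝ)
    (hφ : Continuous φ) (η : Fin J → (Fin m → ℝ) → ℝ) (hη : ∀ j, Continuous (η j)) :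
    PointedCone ℝ (((Fin J → ℝ) × ℝ) × ℝ) where
  carrier := {x | ∃ (μ : Measure (Fin m → ℝ)) (s : Fin J → ℝ),
        IsFiniteMeasure μ ∧ μ Kᶜ = 0 ∧ (∀ j, 0 ≤ s j) ∧
        (∀ j, x.1.1 j = (∫ x, η j x ∂μ) + s j) ∧
        x.1.2 = (μ Set.univ).toReal ∧ (∫ x, φ x ∂μ) ≤ x.2}
  zero_mem' := ⟨0, 0, inferInstance, by simp, by simp, by simp, by simp, by simp⟩
  add_mem' := by
    rintro x y ⟨μ, s, hμ, hμK, hs, h1, h2, h3⟩ ⟨μ', s', hμ', hμK', hs', h1', h2', h3'⟩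
    refine ⟨μ + μ', s + s', inferInstance, by simp [hμK, hμK'],
      fun j => add_nonneg (hs j) (hs' j), fun j => ?_, ?_, ?_⟩
    · rw [integral_add_measure (integrable_of_compact hK μ hμK (hη j))
        (integrable_of_compact hK μ' hμK' (hη j))]
      simp only [Prod.fst_add, Pi.add_apply, h1, h1']
      ring
    · simp only [Prod.fst_add, Prod.snd_add, h2, h2', Measure.add_apply]
      rw [ENNReal.toReal_add (measure_ne_top _ _) (measure_ne_top _ _)]
    · rw [integral_add_measure (integrable_of_compact hK μ hμK hφ)
        (integrable_of_compact hK μ' hμK' hφ)]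
      simp only [Prod.snd_add]
      linarith
  smul_mem' := by
    rintro c x ⟨μ, s, hμ, hμK, hs, h1, h2, h3⟩
    have hc : (0 : ℝ) ≤ (c : ℝ) := c.2
    have ht : (ENNReal.ofReal (c : ℝ)).toReal = (c : ℝ) := ENNReal.toReal_ofReal hc
    refine ⟨ENNReal.ofReal (c : ℝ) • μ, (c : ℝ) • s, ?_, by simp [hμK],
      fun j => mul_nonneg hc (hs j), fun j => ?_, ?_, ?_⟩
    · exact Measure.smul_finite μ ENNReal.ofReal_ne_top
    · rw [integral_smul_measure, ht]
      change (c : ℝ) * x.1.1 j = _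
      rw [h1]
      simp only [smul_eq_mul, Pi.smul_apply]
      ring
    · change (c : ℝ) * x.1.2 = _
      rw [h2]
      simp [ht]
    · rw [integral_smul_measure, ht]
      change _ ≤ (c : ℝ) * x.2
      rw [smul_eq_mul]
      exact mul_le_mul_of_nonneg_left h3 hc

open Filter Topology in
theorem moment_duality {m J : ℕ} (K : Set (Fin m → ℝ)) (hK : IsCompact K) (φ : (Fin m → ℝ) → ℝ)
    (hφ : Continuous φ) (η : Fin J → (Fin m → ℝ) → ℝ) (hη : ∀ j, Continuous (η j))
    (γ : Fin J → ℝ)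
    (hint : ((fun j => γ j, (1 : ℝ)) : (Fin J → ℝ) × ℝ) ∈ interior
      {q : (Fin J → ℝ) × ℝ | ∃ (μ : Measure (Fin m → ℝ)) (s : Fin J → ℝ),
        IsFiniteMeasure μ ∧ μ Kᶜ = 0 ∧ (∀ j, 0 ≤ s j) ∧
        (∀ j, q.1 j = (∫ x, η j x ∂μ) + s j) ∧
        q.2 = (μ Set.univ).toReal})
    (p : ℝ)
    (hmin : IsLeast
      {val : ℝ | ∃ μ : Measure (Fin m → ℝ), IsFiniteMeasure μ ∧
        μ Kᶜ = 0 ∧ μ Set.univ = 1 ∧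
        (∀ j, (∫ x, η j x ∂μ) ≤ γ j) ∧
        val = ∫ x, φ x ∂μ} p) :
    ∃ (lam : Fin J → ℝ) (last : ℝ), (∀ j, 0 ≤ lam j) ∧
      (∀ ω ∈ K, 0 ≤ φ ω + ∑ j, lam j * η j ω + last) ∧ p = -∑ j, lam j * γ j - last := by
  let A := momCone K hK φ hφ η hη
  have hA : ∀ x, x ∈ A ↔ ∃ (μ : Measure (Fin m → ℝ)) (s : Fin J → ℝ),
        IsFiniteMeasure μ ∧ μ Kᶜ = 0 ∧ (∀ j, 0 ≤ s j) ∧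
        (∀ j, x.1.1 j = (∫ x, η j x ∂μ) + s j) ∧
        x.1.2 = (μ Set.univ).toReal ∧ (∫ x, φ x ∂μ) ≤ x.2 := fun x => Iff.rfl
  have hAsmul : ∀ (c : ℝ), 0 ≤ c → ∀ x ∈ A, c • x ∈ A := fun c hc x hx =>
    A.smul_mem hc hx
  let D : Submodule ℝ (((Fin J → ℝ) × ℝ) × ℝ) :=
    { carrier := {x | x.1.1 = x.1.2 • γ}
      zero_mem' := by simp
      add_mem' := by
        intro x y hx hy
        simp only [Set.mem_setOf_eq, Prod.fst_add, Prod.snd_add, add_smul] at *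
        rw [hx, hy]
      smul_mem' := by
        intro c x hx
        simp only [Set.mem_setOf_eq, Prod.smul_fst, Prod.smul_snd, smul_assoc] at *
        rw [hx] }
  let lin : (((Fin J → ℝ) × ℝ) × ℝ) →ₗ[ℝ] ℝ :=
    LinearMap.snd ℝ _ _ - p • (LinearMap.snd ℝ _ _ ∘ₗ LinearMap.fst ℝ _ _)
  let f : (((Fin J → ℝ) × ℝ) × ℝ) →ₗ.[ℝ] ℝ := ⟨D, lin ∘ₗ D.subtype⟩
  have hlin : ∀ x, lin x = x.2 - p * x.1.2 := fun x => rfl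
  obtain ⟨ψ, hψf, hψA⟩ := riesz_extension A f (by
    rintro ⟨x, hxD⟩ hxA
    change 0 ≤ lin x
    rw [hlin]
    change x.1.1 = x.1.2 • γ at hxD
    change x ∈ A at hxA
    have hτ : 0 ≤ x.1.2 := by
      obtain ⟨μ, s, hμ, hμK, hs, h1, h2, h3⟩ := (hA x).1 hxA
      rw [h2]; exact ENNReal.toReal_nonneg
    rcases hτ.eq_or_lt with h0 | hpos
    · obtain ⟨μ, s, hμ, hμK, hs, h1, h2, h3⟩ := (hA x).1 hxA
      rw [← h0] at h2
      have : μ = 0 := by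
        rcases (ENNReal.toReal_eq_zero_iff _).1 h2.symm with h | h
        · exact Measure.measure_univ_eq_zero.1 h
        · exact absurd h (measure_ne_top _ _)
      rw [this] at h3
      rw [← h0]
      simpa using h3
    · obtain ⟨μ, s, hμ, hμK, hs, h1, h2, h3⟩ :=
        (hA _).1 (hAsmul (x.1.2)⁻¹ (inv_nonneg.2 hτ) x hxA)
      simp only [Prod.smul_fst, Prod.smul_snd, hxD, Pi.smul_apply, smul_eq_mul,
        inv_mul_cancel_left₀ hpos.ne', inv_mul_cancel₀ hpos.ne'] at h1 h2 h3
      have h4 := hmin.2 ⟨μ, hμ, hμK, by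
        rw [← ENNReal.ofReal_toReal (measure_ne_top μ Set.univ), ← h2]; simp,
        fun j => by linarith [h1 j, hs j], rfl⟩
      have h5 : p ≤ x.1.2⁻¹ * x.2 := h4.trans h3
      rw [inv_mul_eq_div, le_div_iff₀ hpos] at h5
      linarith) (by
    intro y
    have hcont : Tendsto (fun ε : ℝ => (((fun j => γ j, (1 : ℝ)) : (Fin J → ℝ) × ℝ) + ε • y.1))
        (𝓝[>] 0) (𝓝 ((fun j => γ j, (1 : ℝ)) : (Fin J → ℝ) × ℝ)) := by
      have : Continuous (fun ε : ℝ => (((fun j => γ j, (1 : ℝ)) : (Fin J → ℝ) × ℝ) + ε • y.1)) := by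
        fun_prop
      have h := this.tendsto 0
      rw [zero_smul, add_zero] at h
      exact h.mono_left nhdsWithin_le_nhds
    have hev := hcont.eventually (mem_interior_iff_mem_nhds.1 hint)
    obtain ⟨ε, hε, hεpos⟩ := (hev.and self_mem_nhdsWithin).exists
    have hεpos : 0 < ε := hεpos
    obtain ⟨μ, s, hμ, hμK, hs, h1, h2⟩ := hε
    have hmem : ((((fun j => γ j, (1 : ℝ)) : (Fin J → ℝ) × ℝ) + ε • y.1), ∫ x, φ x ∂μ) ∈ A :=
      (hA _).2 ⟨μ, s, hμ, hμK, hs, h1, h2, le_rfl⟩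
    have hmem2 := hAsmul ε⁻¹ (inv_nonneg.2 hεpos.le) _ hmem
    refine ⟨⟨((ε⁻¹ • γ, ε⁻¹), ε⁻¹ * (∫ x, φ x ∂μ) - y.2), rfl⟩, ?_⟩
    convert hmem2 using 1
    refine Prod.ext (Prod.ext ?_ ?_) ?_
    · funext j
      simp [hεpos.ne', mul_add]
    · simp [hεpos.ne', mul_add]
    · simp)
  have hψD : ∀ x, x.1.1 = x.1.2 • γ → ψ x = x.2 - p * x.1.2 := fun x hx => hψf ⟨x, hx⟩
  let lam : Fin J → ℝ := fun j => ψ ((Pi.single j 1, 0), 0)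
  let last : ℝ := ψ ((0, 1), 0)
  have hone : ψ ((0, 0), 1) = 1 := by
    rw [hψD _ (by simp)]; simp
  have hψ : ∀ x, ψ x = ∑ j, lam j * x.1.1 j + last * x.1.2 + x.2 := by
    intro x
    have hx : x = ∑ j, x.1.1 j • (((Pi.single j 1 : Fin J → ℝ), (0:ℝ)), (0:ℝ))
        + x.1.2 • (((0 : Fin J → ℝ), (1:ℝ)), (0:ℝ)) + x.2 • (((0 : Fin J → ℝ), (0:ℝ)), (1:ℝ)) := by
      refine Prod.ext (Prod.ext ?_ ?_) ?_
      · funext j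
        simp [Prod.fst_sum, Finset.sum_apply, Pi.single_apply]
      · simp [Prod.fst_sum, Prod.snd_sum]
      · simp [Prod.snd_sum]
    conv_lhs => rw [hx]
    simp only [map_add, map_sum, map_smul, hone, smul_eq_mul, mul_one]
    congr 1
    congr 1
    · exact Finset.sum_congr rfl fun j _ => mul_comm _ _
    · exact mul_comm _ _
  refine ⟨lam, last, fun j => ?_, fun ω hω => ?_, ?_⟩
  · refine hψA _ ((hA _).2 ⟨0, Pi.single j 1, inferInstance, by simp, ?_, by simp, by simp, by simp⟩)
    intro i
    by_cases h : i = j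
    · subst h; simp
    · simp [h]
  · have h1 := hψA (((fun j => η j ω), 1), φ ω) ((hA _).2 ⟨Measure.dirac ω, 0, inferInstance, ?_, by simp,
      by simp, by simp, by simp⟩)
    · rw [hψ] at h1
      simp only at h1
      linarith
    · rw [Measure.dirac_apply' _ hK.isClosed.measurableSet.compl]
      simp [hω]
  · have h1 := hψD ((γ, 1), p) (by simp)
    rw [hψ] at h1
    simp only at h1
    linarith

theorem real_le_of_forall {a b : ℝ} (h : ∀ t : ℝ, 0 < t → a + t * b < 0) : a ≤ 0 := by
  by_contra hc
  push Not at hc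
  rcases le_or_gt 0 b with hb | hb
  · have := h 1 one_pos; linarith
  · have h1 := h (a / (-b)) (div_pos hc (by linarith))
    have h2 : a / (-b) * b = -a := by
      have := hb.ne
      field_simp
    linarith

theorem real_nonpos_of_forall {a b : ℝ} (h : ∀ t : ℝ, 0 ≤ t → a + t * b ≤ 0) : b ≤ 0 := by
  by_contra hc
  push Not at hc
  have h1 := h ((|a| + 1) / b) (by positivity)
  have h2 : (|a| + 1) / b * b = |a| + 1 := by field_simp
  linarith [neg_abs_le a]

def formPos (ν : ℕ) : Set (Matrix (Fin ν) (Fin ν) ℝ) :=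
  {S | ∀ x : Fin ν → ℝ, x ≠ 0 → 0 < x ⬝ᵥ S *ᵥ x}

open Filter Topology in
theorem isOpen_formPos (ν : ℕ) : IsOpen (formPos ν) := by
  have heq : formPos ν = {S | ∀ x ∈ Metric.sphere (0 : Fin ν → ℝ) 1, 0 < x ⬝ᵥ S *ᵥ x} := by
    ext S
    refine ⟨fun h x hx => h x ?_, fun h x hx => ?_⟩
    · rintro rfl
      simp at hx
    · have hn : 0 < ‖x‖ := norm_pos_iff.2 hx
      have h1 := h (‖x‖⁻¹ • x) (by simp [norm_smul, hn.ne'])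
      rw [mulVec_smul, dotProduct_smul, smul_dotProduct, smul_eq_mul, smul_eq_mul] at h1
      have h2 : 0 < ‖x‖⁻¹ := inv_pos.2 hn
      exact (mul_pos_iff_of_pos_left h2).1 ((mul_pos_iff_of_pos_left h2).1 h1)
  rw [heq, isOpen_iff_mem_nhds]
  intro S hS
  refine (isCompact_sphere (0 : Fin ν → ℝ) 1).eventually_forall_of_forall_eventually
    (P := fun S x => 0 < x ⬝ᵥ S *ᵥ x) fun x hx => ?_
  have hc : Continuous fun z : Matrix (Fin ν) (Fin ν) ℝ × (Fin ν → ℝ) => z.2 ⬝ᵥ z.1 *ᵥ z.2 := by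
    fun_prop
  exact hc.continuousAt.eventually (lt_mem_nhds (hS x hx))

theorem lagrange_duality {m N ν L : ℕ}
    (F0 : Matrix (Fin ν) (Fin ν) ℝ) (F : Fin m → Matrix (Fin ν) (Fin ν) ℝ)
    (M : Fin N → Matrix (Fin ν) (Fin ν) ℝ)
    (hF0 : F0.IsSymm) (hF : ∀ i, (F i).IsSymm) (hM : ∀ t, (M t).IsSymm)
    (hslater : ∃ (vbar : Fin m → ℝ) (ξbar : Fin N → ℝ),
      (F0 + ∑ i, vbar i • F i + ∑ t, ξbar t • M t).PosDef)
    (u : Fin L → (Fin m → ℝ) → ℝ) (hu : ∀ ℓ, ConvexOn ℝ Set.univ (u ℓ))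
    (hnn : ∀ v ∈ projSpec F0 F M, ∃ ℓ, 0 ≤ u ℓ v) :
    ∃ (δ : Fin L → ℝ) (Z : Matrix (Fin ν) (Fin ν) ℝ), (∀ ℓ, 0 ≤ δ ℓ) ∧ ∑ ℓ, δ ℓ = 1 ∧
      Z.PosSemidef ∧ (∀ t, (Z * M t).trace = 0) ∧
      ∀ v : Fin m → ℝ, 0 ≤ ∑ ℓ, δ ℓ * u ℓ v - (Z * F0).trace - ∑ i, (Z * F i).trace * v i := by
  obtain ⟨vb, ξb, hbar⟩ := hslater
  let Fm : (Fin m → ℝ) → (Fin N → ℝ) → Matrix (Fin ν) (Fin ν) ℝ :=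
    fun v ξ => F0 + ∑ i, v i • F i + ∑ t, ξ t • M t
  have hFmsymm : ∀ v ξ, (Fm v ξ)ᵀ = Fm v ξ := by
    intro v ξ
    simp only [Fm, Matrix.transpose_add, Matrix.transpose_sum, Matrix.transpose_smul]
    rw [hF0.eq]
    simp only [(hF _).eq, (hM _).eq]
  let Cs : Set ((Fin L → ℝ) × Matrix (Fin ν) (Fin ν) ℝ) :=
    {q | ∃ v ξ, (∀ ℓ, u ℓ v < q.1 ℓ) ∧ Fm v ξ - q.2 ∈ formPos ν}
  have hopen : IsOpen Cs := by
    have : Cs = ⋃ v, ⋃ ξ, {q | (∀ ℓ, u ℓ v < q.1 ℓ) ∧ Fm v ξ - q.2 ∈ formPos ν} := by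
      ext q; simp [Cs]
    rw [this]
    refine isOpen_iUnion fun v => isOpen_iUnion fun ξ => ?_
    refine IsOpen.and ?_ ?_
    · simp only [Set.setOf_forall]
      exact isOpen_iInter_of_finite fun ℓ => isOpen_lt continuous_const (by fun_prop)
    · exact (isOpen_formPos ν).preimage (by fun_prop)
  have hconv : Convex ℝ Cs := by
    rintro q ⟨v, ξ, h1, h2⟩ q' ⟨v', ξ', h1', h2'⟩ α β hα hβ hab
    refine ⟨α • v + β • v', α • ξ + β • ξ', fun ℓ => ?_, ?_⟩
    · refine lt_of_le_of_lt ((hu ℓ).2 (Set.mem_univ v) (Set.mem_univ v') hα hβ hab) ?_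
      simp only [smul_eq_mul, Prod.fst_add, Prod.smul_fst, Pi.add_apply, Pi.smul_apply]
      rcases hα.eq_or_lt with h0 | hpos
      · have : β = 1 := by linarith
        subst this
        rw [← h0]
        simpa using h1' ℓ
      · have := mul_lt_mul_of_pos_left (h1 ℓ) hpos
        have := mul_le_mul_of_nonneg_left (h1' ℓ).le hβ
        linarith
    · have heq : Fm (α • v + β • v') (α • ξ + β • ξ') - (α • q + β • q').2 =
          α • (Fm v ξ - q.2) + β • (Fm v' ξ' - q'.2) := by
        have hb : β = 1 - α := by linarith
        simp only [Fm, Prod.snd_add, Prod.smul_snd, Pi.add_apply, Pi.smul_apply, smul_eq_mul,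
          add_smul, mul_smul, Finset.sum_add_distrib, ← Finset.smul_sum]
        rw [hb]
        module
      rw [heq]
      intro x hx
      have e1 := h2 x hx
      have e2 := h2' x hx
      rw [add_mulVec, dotProduct_add, smul_mulVec, smul_mulVec, dotProduct_smul, dotProduct_smul,
        smul_eq_mul, smul_eq_mul]
      rcases hα.eq_or_lt with h0 | hpos
      · have : β = 1 := by linarith
        subst this
        rw [← h0]
        simpa using e2
      · have := mul_pos hpos e1
        have := mul_nonneg hβ e2.le
        linarith
  have h0 : (0 : (Fin L → ℝ) × Matrix (Fin ν) (Fin ν) ℝ) ∉ Cs := by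
    rintro ⟨v, ξ, h1, h2⟩
    obtain ⟨ℓ, hℓ⟩ := hnn v ⟨ξ, by
      refine Matrix.PosSemidef.of_dotProduct_mulVec_nonneg ?_ fun x => ?_
      · exact hFmsymm v ξ
      · by_cases hx : x = 0
        · simp [hx]
        · have := (h2 x hx).le
          simpa using this⟩
    have := h1 ℓ
    simp at this
    linarith
  obtain ⟨f, hf⟩ := geometric_hahn_banach_open_point hconv hopen h0
  rw [map_zero] at hf
  let dd : Fin L → ℝ := fun ℓ => -f (Pi.single ℓ 1, 0)
  let w : Matrix (Fin ν) (Fin ν) ℝ := Matrix.of fun i j => f (0, Matrix.single i j 1)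
  let Z : Matrix (Fin ν) (Fin ν) ℝ := (2⁻¹ : ℝ) • (w + wᵀ)
  have hfy : ∀ y : Fin L → ℝ, f (y, 0) = -∑ ℓ, dd ℓ * y ℓ := by
    intro y
    have hy : (y, (0 : Matrix (Fin ν) (Fin ν) ℝ)) =
        ∑ ℓ, y ℓ • ((Pi.single ℓ 1 : Fin L → ℝ), (0 : Matrix (Fin ν) (Fin ν) ℝ)) := by
      refine Prod.ext ?_ ?_
      · funext j
        simp [Prod.fst_sum, Finset.sum_apply, Pi.single_apply]
      · simp [Prod.snd_sum]
    rw [hy, map_sum, ← Finset.sum_neg_distrib]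
    refine Finset.sum_congr rfl fun ℓ _ => ?_
    rw [map_smul, smul_eq_mul]
    simp only [dd]
    ring
  have hfS0 : ∀ S : Matrix (Fin ν) (Fin ν) ℝ, f (0, S) = ∑ i, ∑ j, w i j * S i j := by
    intro S
    have hS : ((0 : Fin L → ℝ), S) = ∑ i, ∑ j, S i j • ((0 : Fin L → ℝ), Matrix.single i j (1:ℝ)) := by
      refine Prod.ext ?_ ?_
      · simp [Prod.fst_sum]
      · simp only [Prod.snd_sum, Prod.smul_snd, Matrix.smul_single, smul_eq_mul, mul_one]
        exact Matrix.matrix_eq_sum_single S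
    rw [hS, map_sum]
    refine Finset.sum_congr rfl fun i _ => ?_
    rw [map_sum]
    refine Finset.sum_congr rfl fun j _ => ?_
    rw [map_smul, smul_eq_mul, mul_comm]
    rfl
  have hfS : ∀ S : Matrix (Fin ν) (Fin ν) ℝ, Sᵀ = S → f (0, S) = (Z * S).trace := by
    intro S hS
    have h1 : (w * S).trace = ∑ i, ∑ j, w i j * S i j := by
      simp only [Matrix.trace, Matrix.diag_apply, Matrix.mul_apply]
      refine Finset.sum_congr rfl fun i _ => Finset.sum_congr rfl fun j _ => ?_
      rw [← Matrix.transpose_apply S, hS]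
    have h2 : (wᵀ * S).trace = (w * S).trace := by
      rw [← Matrix.trace_transpose, Matrix.transpose_mul, hS, Matrix.transpose_transpose,
        Matrix.trace_mul_comm]
    rw [hfS0, ← h1]
    simp only [Z, Matrix.smul_mul, Matrix.add_mul, Matrix.trace_smul, Matrix.trace_add, h2,
      smul_eq_mul]
    ring
  have hfsplit : ∀ y S, f (y, S) = f (y, 0) + f (0, S) := by
    intro y S
    rw [← map_add]; simp
  have hone : (1 : Matrix (Fin ν) (Fin ν) ℝ) ∈ formPos ν := by
    intro x hx
    simp only [one_mulVec]
    exact lt_of_le_of_ne (by simpa using dotProduct_star_self_nonneg x)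
      (fun h => hx (dotProduct_self_eq_zero.1 h.symm))
  have hbarmem : Fm vb ξb ∈ formPos ν := by
    intro x hx
    have := hbar.dotProduct_mulVec_pos hx
    simpa using this
  -- the limiting inequality
  have hlim : ∀ v ξ, (Z * Fm v ξ).trace ≤ ∑ ℓ, dd ℓ * u ℓ v := by
    intro v ξ
    have h1 : f ((fun ℓ => u ℓ v), Fm v ξ) ≤ 0 := by
      refine real_le_of_forall (b := f ((fun _ => 1), -1)) fun t ht => ?_
      have h2 := hf (((fun ℓ => u ℓ v), Fm v ξ) + t • ((fun _ => 1), -1)) ⟨v, ξ, fun ℓ => by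
        simp [ht], by
        intro x hx
        have := mul_pos ht (hone x hx)
        simpa [smul_mulVec] using this⟩
      rw [map_add, map_smul, smul_eq_mul] at h2
      exact h2
    rw [hfsplit, hfy, hfS _ (hFmsymm v ξ)] at h1
    linarith
  have hbase : ∀ ℓ0 : Fin L, ∀ t : ℝ, 0 ≤ t → f ((fun ℓ => u ℓ vb + 1), 0) + t * (-dd ℓ0) ≤ 0 := by
    intro ℓ0 t ht
    have h2 := hf (((fun ℓ => u ℓ vb + 1), 0) + t • (Pi.single ℓ0 1, 0)) ⟨vb, ξb, fun ℓ => by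
      have : 0 ≤ t * (Pi.single ℓ0 1 : Fin L → ℝ) ℓ := mul_nonneg ht (by
        by_cases h : ℓ = ℓ0
        · subst h; simp
        · simp [h])
      simp only [Prod.fst_add, Prod.smul_fst, Pi.add_apply, Pi.smul_apply, smul_eq_mul]
      linarith, by simpa using hbarmem⟩
    rw [map_add, map_smul, smul_eq_mul] at h2
    simp only [dd, neg_neg]
    exact h2.le
  have hdd : ∀ ℓ, 0 ≤ dd ℓ := fun ℓ => by
    linarith [real_nonpos_of_forall (hbase ℓ)]
  have hddpos : 0 < ∑ ℓ, dd ℓ := by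
    refine lt_of_le_of_ne (Finset.sum_nonneg fun ℓ _ => hdd ℓ) fun h => ?_
    have hz := (Finset.sum_eq_zero_iff_of_nonneg (fun ℓ _ => hdd ℓ)).1 h.symm
    have h2 := hf ((fun ℓ => u ℓ vb + 1), 0) ⟨vb, ξb, fun ℓ => by simp, by simpa using hbarmem⟩
    rw [hfy] at h2
    simp [hz] at h2
  have hZ : Z.PosSemidef := by
    refine Matrix.PosSemidef.of_dotProduct_mulVec_nonneg ?_ fun x => ?_
    · change Zᵀ = Z
      simp only [Z, Matrix.transpose_smul, Matrix.transpose_add, Matrix.transpose_transpose]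
      rw [add_comm]
    · have hsym : (Matrix.vecMulVec x x)ᵀ = Matrix.vecMulVec x x := Matrix.transpose_vecMulVec x x
      have h1 : star x ⬝ᵥ Z *ᵥ x = f (0, Matrix.vecMulVec x x) := by
        rw [hfS _ hsym, Matrix.mul_vecMulVec, Matrix.trace_vecMulVec, star_trivial,
          dotProduct_comm]
      rw [h1]
      have h2 : -f (0, Matrix.vecMulVec x x) ≤ 0 := by
        refine real_nonpos_of_forall (a := f ((fun ℓ => u ℓ vb + 1), 0)) fun t ht => ?_
        have h2 := hf (((fun ℓ => u ℓ vb + 1), 0) + (-t) • (0, Matrix.vecMulVec x x))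
          ⟨vb, ξb, fun ℓ => by simp, by
            intro z hz
            have e1 := hbarmem z hz
            have e2 : 0 ≤ t * ((z ⬝ᵥ x) * (z ⬝ᵥ x)) := mul_nonneg ht (mul_self_nonneg _)
            have e3 : z ⬝ᵥ (Matrix.vecMulVec x x) *ᵥ z = (z ⬝ᵥ x) * (z ⬝ᵥ x) := by
              rw [Matrix.vecMulVec_mulVec]
              simp [dotProduct_comm]
            have e4 : Fm vb ξb - (((fun ℓ => u ℓ vb + 1), 0) + (-t) • ((0 : Fin L → ℝ), Matrix.vecMulVec x x)).2
                = Fm vb ξb + t • Matrix.vecMulVec x x := by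
              simp
            rw [e4, add_mulVec, dotProduct_add, smul_mulVec, dotProduct_smul, e3, smul_eq_mul]
            linarith⟩
        rw [map_add, map_smul, smul_eq_mul] at h2
        linarith
      linarith
  have hexp : ∀ v ξ, (Z * Fm v ξ).trace = (Z * F0).trace + ∑ i, v i * (Z * F i).trace +
      ∑ t, ξ t * (Z * M t).trace := by
    intro v ξ
    simp only [Fm, Matrix.mul_add, Matrix.mul_sum, Matrix.trace_add, Matrix.trace_sum,
      Matrix.mul_smul, Matrix.trace_smul, smul_eq_mul]
  have hZM : ∀ t, (Z * M t).trace = 0 := by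
    intro t
    have key : ∀ c : ℝ, ((Z * F0).trace + ∑ i, vb i * (Z * F i).trace - ∑ ℓ, dd ℓ * u ℓ vb)
        + c * (Z * M t).trace ≤ 0 := by
      intro c
      have h1 := hlim vb (Pi.single t c)
      rw [hexp] at h1
      have h2 : ∑ t', (Pi.single t c : Fin N → ℝ) t' * (Z * M t').trace = c * (Z * M t).trace := by
        rw [Finset.sum_eq_single t]
        · simp
        · intro b _ hb
          simp [hb]
        · simp
      rw [h2] at h1
      linarith
    have h1 := real_nonpos_of_forall fun c _ => key c
    have h2 := real_nonpos_of_forall (b := -(Z * M t).trace) fun c _ => by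
      have := key (-c)
      rw [neg_mul_comm] at this
      exact this
    linarith
  have hinv : 0 ≤ (∑ ℓ, dd ℓ)⁻¹ := inv_nonneg.2 hddpos.le
  refine ⟨fun ℓ => (∑ ℓ, dd ℓ)⁻¹ * dd ℓ, (∑ ℓ, dd ℓ)⁻¹ • Z, fun ℓ => mul_nonneg hinv (hdd ℓ), ?_,
    hZ.smul hinv, fun t => ?_, fun v => ?_⟩
  · rw [← Finset.mul_sum, inv_mul_cancel₀ hddpos.ne']
  · rw [Matrix.smul_mul, Matrix.trace_smul, hZM, smul_zero]
  · have h1 := hlim v 0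
    rw [hexp] at h1
    simp only [Pi.zero_apply, zero_mul, Finset.sum_const_zero, add_zero] at h1
    have h2 := mul_nonneg hinv (sub_nonneg.2 h1)
    simp only [Matrix.smul_mul, Matrix.trace_smul, smul_eq_mul, mul_assoc, ← Finset.mul_sum]
    simp only [mul_comm (v _)] at h2
    linarith

theorem psd_trace_mul_nonneg {ν : ℕ} {A B : Matrix (Fin ν) (Fin ν) ℝ}
    (hA : A.PosSemidef) (hB : B.PosSemidef) : 0 ≤ (A * B).trace := by
  obtain ⟨n, v, hv⟩ := Matrix.posSemidef_iff_eq_sum_vecMulVec.1 hB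
  rw [hv, Matrix.mul_sum, Matrix.trace_sum]
  refine Finset.sum_nonneg fun i _ => ?_
  rw [Matrix.mul_vecMulVec, Matrix.trace_vecMulVec, dotProduct_comm]
  exact hA.dotProduct_mulVec_nonneg (v i)

theorem continuous_pwMinMax {m r L : ℕ} [NeZero r] [NeZero L]
    (g : Fin r → Fin L → MvPolynomial (Fin m) ℝ) : Continuous (pwMinMax g) := by
  unfold pwMinMax
  refine Continuous.finset_inf'_apply _ fun k _ => ?_
  exact Continuous.finset_sup'_apply _ fun ℓ _ => MvPolynomial.continuous_eval _

theorem trace_nonneg_on_spec {m N ν : ℕ}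
    {F0 : Matrix (Fin ν) (Fin ν) ℝ} {F : Fin m → Matrix (Fin ν) (Fin ν) ℝ}
    {M : Fin N → Matrix (Fin ν) (Fin ν) ℝ} {Z : Matrix (Fin ν) (Fin ν) ℝ} (hZ : Z.PosSemidef)
    (hZM : ∀ t, (Z * M t).trace = 0) {v : Fin m → ℝ} (hv : v ∈ projSpec F0 F M) :
    0 ≤ (Z * F0).trace + ∑ i, (Z * F i).trace * v i := by
  obtain ⟨ξ, hξ⟩ := hv
  have := psd_trace_mul_nonneg hZ hξ
  simp only [Matrix.mul_add, Matrix.mul_sum, Matrix.trace_add, Matrix.trace_sum,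
      Matrix.mul_smul, Matrix.trace_smul, smul_eq_mul, hZM, mul_zero, Finset.sum_const_zero,
      add_zero] at this
  simpa only [mul_comm (v _)] using this

/-- Exact SOS reformulation for piecewise SOS-convex moment
optimization: under the interior point condition and compactness/strict
feasibility assumptions, `min (P) = max (D)`. -/
theorem momentProblem_eq_sosProgram
    {m N ν L r J : ℕ} [NeZero L] [NeZero r]
    (F0 : Matrix (Fin ν) (Fin ν) ℝ) (F : Fin m → Matrix (Fin ν) (Fin ν) ℝ)
    (M : Fin N → Matrix (Fin ν) (Fin ν) ℝ)
    (hF0 : F0.IsSymm) (hF : ∀ i, (F i).IsSymm) (hM : ∀ t, (M t).IsSymm)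
    (g : Fin r → Fin L → MvPolynomial (Fin m) ℝ)
    (h : Fin J → MvPolynomial (Fin m) ℝ) (γ : Fin J → ℝ)
    (hg : ∀ k ℓ, IsSOSConvex (g k ℓ)) (hh : ∀ j, IsSOSConvex (h j))
    (d : ℕ) (hdeven : Even d)
    (hdge : (∀ k ℓ, (g k ℓ).totalDegree ≤ d) ∧ (∀ j, (h j).totalDegree ≤ d))
    (hdmin : ∀ d', Even d' →
      ((∀ k ℓ, (g k ℓ).totalDegree ≤ d') ∧ (∀ j, (h j).totalDegree ≤ d')) → d ≤ d')
    (hcompact : IsCompact (projSpec F0 F M))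
    (hslater : ∃ (vbar : Fin m → ℝ) (ξbar : Fin N → ℝ),
      (F0 + ∑ i, vbar i • F i + ∑ t, ξbar t • M t).PosDef)
    (hint : ((fun j => γ j, (1 : ℝ)) : (Fin J → ℝ) × ℝ) ∈ interior
      {q : (Fin J → ℝ) × ℝ | ∃ (μ : Measure (Fin m → ℝ)) (s : Fin J → ℝ),
        IsFiniteMeasure μ ∧ μ (projSpec F0 F M)ᶜ = 0 ∧ (∀ j, 0 ≤ s j) ∧
        (∀ j, q.1 j = (∫ x, eval x (h j) ∂μ) + s j) ∧
        q.2 = (μ Set.univ).toReal})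
    (p : ℝ)
    (hmin : IsLeast
      {val : ℝ | ∃ μ : Measure (Fin m → ℝ), IsFiniteMeasure μ ∧
        μ (projSpec F0 F M)ᶜ = 0 ∧ μ Set.univ = 1 ∧
        (∀ j, (∫ x, eval x (h j) ∂μ) ≤ γ j) ∧
        val = ∫ x, pwMinMax g x ∂μ} p) :
    IsGreatest
      {val : ℝ | ∃ (lam : Fin J → ℝ) (lamlast : ℝ)
        (Z : Fin r → Matrix (Fin ν) (Fin ν) ℝ) (δ : Fin r → Fin L → ℝ),
        (∀ j, 0 ≤ lam j) ∧ (∀ k, (Z k).PosSemidef) ∧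
        (∀ k ℓ, 0 ≤ δ k ℓ) ∧ (∀ k, ∑ ℓ, δ k ℓ = 1) ∧
        (∀ k, IsSOSDeg d (∑ ℓ, C (δ k ℓ) * g k ℓ + ∑ j, C (lam j) * h j
          + C lamlast - C ((Z k * F0).trace)
          - ∑ i, C ((Z k * F i).trace) * X i)) ∧
        (∀ k t, (Z k * M t).trace = 0) ∧
        val = -∑ j, lam j * γ j - lamlast} p := by

  have hφ := continuous_pwMinMax g
  have hη : ∀ j, Continuous fun x : Fin m → ℝ => eval x (h j) :=
    fun j => MvPolynomial.continuous_eval _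
  refine ⟨?_, ?_⟩
  · obtain ⟨lam, last, hlam, hpos, hval⟩ := moment_duality (projSpec F0 F M) hcompact
      (pwMinMax g) hφ (fun j x => eval x (h j)) hη γ hint p hmin
    let U : Fin r → Fin L → MvPolynomial (Fin m) ℝ := fun k ℓ =>
      g k ℓ + (∑ j, C (lam j) * h j + C last)
    have hUt : ∀ k ℓ a, IsSOS (tangentRem a (U k ℓ)) := by
      intro k ℓ a
      simp only [U, tangentRem_add, tangentRem_sum, tangentRem_C_mul, tangentRem_C, add_zero]
      exact ((hg k ℓ).tangent a).add (IsSOS.sum _ _ fun j _ => ((hh j).tangent a).C_mul (hlam j))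
    have hUe : ∀ k ℓ v, eval v (U k ℓ) = eval v (g k ℓ) + ∑ j, lam j * eval v (h j) + last := by
      intro k ℓ v
      simp only [U, map_add, map_sum, map_mul, eval_C]
      ring
    have hdual := fun k => lagrange_duality F0 F M hF0 hF hM hslater
      (fun ℓ v => eval v (U k ℓ)) (fun ℓ => convexOn_of_tangent (hUt k ℓ)) (by
        intro v hv
        obtain ⟨ℓ, -, hℓ⟩ := Finset.exists_mem_eq_sup' (Finset.univ_nonempty (α := Fin L))
          (fun ℓ => eval v (g k ℓ))
        refine ⟨ℓ, ?_⟩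
        rw [hUe, ← hℓ]
        have h1 : pwMinMax g v ≤ _ := Finset.inf'_le _ (Finset.mem_univ k)
        have h2 := hpos v hv
        linarith)
    choose δ Z hδ hδ1 hZ hZM hnn using hdual
    have hUsum : ∀ k, ∑ ℓ, C (δ k ℓ) * U k ℓ =
        ∑ ℓ, C (δ k ℓ) * g k ℓ + ∑ j, C (lam j) * h j + C last := by
      intro k
      simp only [U, mul_add (C (δ k _)) (g k _), Finset.sum_add_distrib]
      rw [← Finset.sum_mul, ← map_sum, hδ1 k]
      simp [add_assoc]
    have hdegmain : ∀ k, (∑ ℓ, C (δ k ℓ) * g k ℓ + ∑ j, C (lam j) * h j + C last).totalDegree ≤ d := by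
      intro k
      refine (totalDegree_add _ _).trans (max_le ((totalDegree_add _ _).trans (max_le ?_ ?_)) ?_)
      · refine totalDegree_finsetSum_le fun ℓ _ => ?_
        exact (totalDegree_mul _ _).trans (by simpa using hdge.1 k ℓ)
      · refine totalDegree_finsetSum_le fun j _ => ?_
        exact (totalDegree_mul _ _).trans (by simpa using hdge.2 j)
      · simp
    by_cases hd0 : d = 0
    · refine ⟨lam, last, fun _ => 0, δ, hlam, fun _ => Matrix.PosSemidef.zero, hδ, hδ1,
        fun k => ?_, by simp, hval⟩
      simp only [Matrix.zero_mul, Matrix.trace_zero, map_zero, zero_mul, Finset.sum_const_zero,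
        sub_zero]
      refine ⟨?_, hdegmain k⟩
      have h1 := hdegmain k
      rw [hd0, Nat.le_zero, totalDegree_eq_zero_iff_eq_C] at h1
      rw [h1]
      apply IsSOS.const
      obtain ⟨vb, ξb, hb⟩ := hslater
      have hvb : vb ∈ projSpec F0 F M := ⟨ξb, hb.posSemidef⟩
      have h2 := trace_nonneg_on_spec (hZ k) (hZM k) hvb
      have h3 := hnn k vb
      have h4 : eval vb (∑ ℓ, C (δ k ℓ) * U k ℓ) = ∑ ℓ, δ k ℓ * eval vb (U k ℓ) := by simp
      rw [hUsum, h1, eval_C] at h4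
      linarith
    · have hd1 : 1 ≤ d := Nat.one_le_iff_ne_zero.2 hd0
      refine ⟨lam, last, Z, δ, hlam, hZ, hδ, hδ1, fun k => ⟨?_, ?_⟩, hZM, hval⟩
      · rw [← hUsum]
        have heq : ∑ ℓ, C (δ k ℓ) * U k ℓ - C ((Z k * F0).trace) - ∑ i, C ((Z k * F i).trace) * X i
            = ∑ ℓ, C (δ k ℓ) * U k ℓ + (C (-(Z k * F0).trace) +
              ∑ i, C (-(Z k * F i).trace) * X i) := by
          simp only [map_neg, neg_mul, Finset.sum_neg_distrib]
          ring
        rw [heq]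
        refine sos_of_tangent (fun a => ?_) (fun x => ?_)
        · simp only [tangentRem_add, tangentRem_sum, tangentRem_C_mul, tangentRem_C, tangentRem_X,
            mul_zero, Finset.sum_const_zero, add_zero]
          exact IsSOS.sum _ _ fun ℓ _ => (hUt k ℓ a).C_mul (hδ k ℓ)
        · rw [← heq]
          have := hnn k x
          simpa only [map_sub, map_sum, map_mul, eval_C, eval_X] using this
      · refine (totalDegree_sub _ _).trans (max_le ((totalDegree_sub _ _).trans
          (max_le (hdegmain k) (by simp))) ?_)
        refine totalDegree_finsetSum_le fun i _ => ?_
        refine (totalDegree_mul _ _).trans ?_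
        rw [totalDegree_C, totalDegree_X]
        omega
  · rintro val ⟨lam, last, Z, δ, hlam, hZ, hδ, hδ1, hsos, hZM, rfl⟩
    obtain ⟨μ, hμ, hμK, hμ1, hμh, rfl⟩ := hmin.1
    have hint1 : ∀ j, Integrable (fun x => eval x (h j)) μ :=
      fun j => integrable_of_compact hcompact μ hμK (hη j)
    have hint2 : Integrable (pwMinMax g) μ := integrable_of_compact hcompact μ hμK hφ
    have hpt : ∀ v ∈ projSpec F0 F M, -∑ j, lam j * eval v (h j) - last ≤ pwMinMax g v := by
      intro v hv
      refine Finset.le_inf' _ _ fun k _ => ?_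
      have h1 := (hsos k).1.eval_nonneg v
      simp only [map_sub, map_add, map_sum, map_mul, eval_C, eval_X] at h1
      have h2 := trace_nonneg_on_spec (hZ k) (hZM k) hv
      have h3 : ∑ ℓ, δ k ℓ * eval v (g k ℓ) ≤
          Finset.univ.sup' Finset.univ_nonempty fun ℓ => eval v (g k ℓ) := by
        calc _ ≤ ∑ ℓ, δ k ℓ * (Finset.univ.sup' Finset.univ_nonempty fun ℓ => eval v (g k ℓ)) :=
              Finset.sum_le_sum fun ℓ _ => mul_le_mul_of_nonneg_left
                (Finset.le_sup' (fun ℓ => eval v (g k ℓ)) (Finset.mem_univ ℓ)) (hδ k ℓ)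
          _ = _ := by rw [← Finset.sum_mul, hδ1 k, one_mul]
      linarith
    have hprob : μ.real Set.univ = 1 := by simp [Measure.real, hμ1]
    have hint3 : Integrable (fun v => -∑ j, lam j * eval v (h j)) μ :=
      (integrable_finsetSum _ fun j _ => (hint1 j).const_mul (lam j)).neg
    have h1 : ∫ v, (-∑ j, lam j * eval v (h j) - last) ∂μ ≤ ∫ v, pwMinMax g v ∂μ := by
      refine integral_mono_ae (hint3.sub (integrable_const _)) hint2 ?_
      have : ∀ᵐ v ∂μ, v ∈ projSpec F0 F M := by rw [ae_iff]; exact hμK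
      filter_upwards [this] with v hv using hpt v hv
    rw [integral_sub hint3 (integrable_const _), integral_neg,
      integral_finsetSum _ fun j _ => (hint1 j).const_mul (lam j), integral_const, hprob,
      one_smul] at h1
    simp only [integral_const_mul] at h1
    have h2 : ∑ j, lam j * ∫ v, eval v (h j) ∂μ ≤ ∑ j, lam j * γ j :=
      Finset.sum_le_sum fun j _ => mul_le_mul_of_nonneg_left (hμh j) (hlam j)
    linarith

end
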